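/- arXiv:hep-th/9805176 — 6 statements merged into one kernel-verified Lean document; each statement's English description precedes it below -/
import Mathlib

section
/- Let N and K be endomorphisms of a vector space V over a field k such that N ∘ N = 0, K ∘ K = 0, and K ∘ N + N ∘ K = c • id for some nonzero scalar c. Then V is the internal direct sum of ker N and ker K, and K restricts to a linear isomorphism from ker N onto ker K; in particular, if V is finite-dimensional then dim ker N = dim ker K = (dim V)/2. -/
/-!
The identity `K ∘ N + N ∘ K = u` with `u` injective forces `ker N ∩ ker K = 0`, and with `u`
surjective it forces `range N + range K = V`. Since `N` and `K` square to zero, each range lies in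
the corresponding kernel, so the two pairs squeeze: the kernels are complementary and each kernel
equals its range. Then `K` sends the complement `ker N` of `ker K` bijectively onto
`range K = ker K`, and rank-nullity reads `dim V = 2 dim ker K`; exchanging `N` and `K` gives
`dim V = 2 dim ker N`.
-/

section Complements

variable {R M M' : Type*} [Ring R] [AddCommGroup M] [Module R M] [AddCommGroup M'] [Module R M']

theorem bijOn_range_of_isCompl_ker {f : M →ₗ[R] M'} {p : Submodule R M}
    (h : IsCompl p (LinearMap.ker f)) :
    Set.BijOn f (p : Set M) (LinearMap.range f : Set M') := by
  have himage : f '' p = LinearMap.range f := by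
    rw [← Submodule.map_coe, Submodule.map_eq_range_iff.2 h.codisjoint]
  rw [← himage]
  exact (LinearMap.injOn_of_disjoint_ker le_rfl h.disjoint).bijOn_image

end Complements

section Rank

universe v

variable {R : Type*} {V : Type v} [Ring R] [HasRankNullity.{v} R] [AddCommGroup V] [Module R V]

theorem two_mul_rank_ker_of_ker_eq_range {f : V →ₗ[R] V}
    (h : LinearMap.ker f = LinearMap.range f) :
    2 * Module.rank R (LinearMap.ker f) = Module.rank R V := by
  rw [two_mul, ← f.rank_range_add_rank_ker, h]

end Rank

section Anticommutator

variable {R V : Type*} [Ring R] [AddCommGroup V] [Module R V] {N K : V →ₗ[R] V}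

theorem disjoint_ker_of_injective_anticommutator
    (hu : Function.Injective (K ∘ₗ N + N ∘ₗ K)) :
    Disjoint (LinearMap.ker N) (LinearMap.ker K) := by
  rw [Submodule.disjoint_def]
  intro x (hxN : N x = 0) (hxK : K x = 0)
  exact (map_eq_zero_iff _ hu).1 (by simp [hxN, hxK])

theorem codisjoint_range_of_surjective_anticommutator
    (hu : Function.Surjective (K ∘ₗ N + N ∘ₗ K)) :
    Codisjoint (LinearMap.range N) (LinearMap.range K) := by
  rw [codisjoint_iff, Submodule.eq_top_iff']
  intro x
  obtain ⟨y, rfl⟩ := hu x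
  exact add_mem (Submodule.mem_sup_right ⟨N y, rfl⟩) (Submodule.mem_sup_left ⟨K y, rfl⟩)

theorem isCompl_ker_of_bijective_anticommutator (hN : N ∘ₗ N = 0) (hK : K ∘ₗ K = 0)
    (hu : Function.Bijective (K ∘ₗ N + N ∘ₗ K)) :
    IsCompl (LinearMap.ker N) (LinearMap.ker K) where
  disjoint := disjoint_ker_of_injective_anticommutator hu.injective
  codisjoint := (codisjoint_range_of_surjective_anticommutator hu.surjective).mono
    (LinearMap.range_le_ker_iff.2 hN) (LinearMap.range_le_ker_iff.2 hK)

theorem ker_eq_range_of_bijective_anticommutator (hN : N ∘ₗ N = 0) (hK : K ∘ₗ K = 0)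
    (hu : Function.Bijective (K ∘ₗ N + N ∘ₗ K)) :
    LinearMap.ker K = LinearMap.range K := by
  have hdisj : Disjoint (LinearMap.ker K) (LinearMap.range N) :=
    (disjoint_ker_of_injective_anticommutator hu.injective).symm.mono_right
      (LinearMap.range_le_ker_iff.2 hN)
  have hcodisj : Codisjoint (LinearMap.range K) (LinearMap.range N) :=
    (codisjoint_range_of_surjective_anticommutator hu.surjective).symm
  exact (eq_of_le_of_inf_le_of_le_sup (LinearMap.range_le_ker_iff.2 hK)
    (hdisj.le_bot.trans bot_le) (le_top.trans hcodisj.top_le)).symm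

end Anticommutator

theorem stmt0_general.{v} {R : Type*} {V : Type v} [Ring R] [HasRankNullity.{v} R]
    [AddCommGroup V] [Module R V] (N K : V →ₗ[R] V) (hN : N ∘ₗ N = 0) (hK : K ∘ₗ K = 0)
    (hu : Function.Bijective (K ∘ₗ N + N ∘ₗ K)) :
    IsCompl (LinearMap.ker N) (LinearMap.ker K) ∧
    Set.BijOn K (LinearMap.ker N : Set V) (LinearMap.ker K : Set V) ∧
    2 * Module.rank R (LinearMap.ker N) = Module.rank R V ∧
    2 * Module.rank R (LinearMap.ker K) = Module.rank R V := by
  have hcompl := isCompl_ker_of_bijective_anticommutator hN hK hu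
  have hkerK : LinearMap.ker K = LinearMap.range K :=
    ker_eq_range_of_bijective_anticommutator hN hK hu
  have hkerN : LinearMap.ker N = LinearMap.range N :=
    ker_eq_range_of_bijective_anticommutator hK hN (by rwa [add_comm])
  have hbij : Set.BijOn K (LinearMap.ker N : Set V) (LinearMap.ker K : Set V) := by
    simpa only [← hkerK] using bijOn_range_of_isCompl_ker hcompl
  exact ⟨hcompl, hbij, two_mul_rank_ker_of_ker_eq_range hkerN,
    two_mul_rank_ker_of_ker_eq_range hkerK⟩

/-- Let `N` and `K` be endomorphisms of a vector space `V` over a field `k` such that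
`N ∘ N = 0`, `K ∘ K = 0`, and `K ∘ N + N ∘ K = c • id` for some nonzero scalar `c`.
Then `V` is the internal direct sum of `ker N` and `ker K`, `K` restricts to a linear
isomorphism (a bijection) from `ker N` onto `ker K`, and if `V` is finite-dimensional
then `dim ker N = dim ker K = (dim V)/2`. -/
theorem stmt0 {k V : Type*} [Field k] [AddCommGroup V] [Module k V]
    (N K : V →ₗ[k] V) (c : k) (hc : c ≠ 0)
    (hN : N ∘ₗ N = 0) (hK : K ∘ₗ K = 0)
    (h : K ∘ₗ N + N ∘ₗ K = c • (LinearMap.id : V →ₗ[k] V)) :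
    IsCompl (LinearMap.ker N) (LinearMap.ker K) ∧
    Set.BijOn K (LinearMap.ker N : Set V) (LinearMap.ker K : Set V) ∧
    (FiniteDimensional k V →
      Module.finrank k (LinearMap.ker N) = Module.finrank k V / 2 ∧
      Module.finrank k (LinearMap.ker K) = Module.finrank k V / 2) := by
  obtain ⟨hcompl, hbij, hrankN, hrankK⟩ :=
    stmt0_general N K hN hK (h ▸ (LinearEquiv.smulOfNeZero k V c hc).bijective)
  exact ⟨hcompl, hbij, fun _ => ⟨by simp [Module.finrank, ← hrankN],
    by simp [Module.finrank, ← hrankK]⟩⟩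
end

section
/- Let V be a finite-dimensional vector space over a field, let S be a semisimple endomorphism of V and N a nilpotent endomorphism of V with S ∘ N = N ∘ S. Then ker(S + N) = ker S ∩ ker N. -/
/-!
Since `S = (S + N) + (-N)` is a sum of commuting endomorphisms, a generalized eigenvector of both
`S + N` and `N` is one of `S`, and the eigenvalues subtract. If `S` is semisimple, it is then a
genuine eigenvector of `S`; if it was moreover an eigenvector of `S + N`, it is one of
`N = (S + N) - S`. For `N` nilpotent every vector is a generalized eigenvector of `N` for `0`, and
the case of eigenvalue `0` is the equality of kernels.
-/

section Eigenspaces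

variable {R M : Type*} [CommRing R] [AddCommGroup M] [Module R M] {f g : Module.End R M}

lemma genEigenspace_neg (f : Module.End R M) (μ : R) (k : ℕ∞) :
    (-f).genEigenspace μ k = f.genEigenspace (-μ) k := by
  have neg_sub_smul_one : -f - μ • 1 = -(f - (-μ) • 1) := by module
  ext x
  simp only [Module.End.mem_genEigenspace, neg_sub_smul_one, LinearMap.mem_ker,
    neg_pow (f - (-μ) • 1), Module.End.mul_apply]
  refine exists_congr fun l ↦ and_congr_right fun _ ↦ ?_
  obtain h | h := neg_one_pow_eq_or (Module.End R M) l <;> simp [h]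

lemma genEigenspace_add_inf_genEigenspace_le (hfg : Commute f g) (μ ν : R) (k l : ℕ∞) :
    (f + g).genEigenspace μ k ⊓ g.genEigenspace ν l ≤ f.genEigenspace (μ - ν) (k + l) := by
  have hcomm : Commute (f + g) (-g) := (hfg.add_left (Commute.refl g)).neg_right
  simpa [genEigenspace_neg, sub_eq_add_neg] using
    Module.End.genEigenspace_inf_le_add (f + g) (-g) μ (-ν) k l hcomm

lemma eigenspace_add_inf_maxGenEigenspace (hf : f.IsFinitelySemisimple) (hfg : Commute f g)
    (μ ν : R) :
    (f + g).eigenspace μ ⊓ g.maxGenEigenspace ν = f.eigenspace (μ - ν) ⊓ g.eigenspace ν := by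
  refine le_antisymm (fun x hx ↦ ?_) fun x ⟨hfx, hgx⟩ ↦ ?_
  · have hfx : x ∈ f.eigenspace (μ - ν) := by
      rw [← hf.maxGenEigenspace_eq_eigenspace]
      simpa only [add_top] using genEigenspace_add_inf_genEigenspace_le hfg μ ν 1 ⊤ hx
    refine ⟨hfx, Module.End.mem_eigenspace_iff.mpr ?_⟩
    calc
      g x = (f + g) x - f x := by rw [LinearMap.add_apply, add_sub_cancel_left]
      _ = μ • x - (μ - ν) • x := by
        rw [Module.End.mem_eigenspace_iff.mp hx.1, Module.End.mem_eigenspace_iff.mp hfx]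
      _ = ν • x := by module
  · refine ⟨Module.End.mem_eigenspace_iff.mpr ?_, (g.genEigenspace ν).monotone le_top hgx⟩
    rw [LinearMap.add_apply, Module.End.mem_eigenspace_iff.mp hfx,
      Module.End.mem_eigenspace_iff.mp hgx, ← add_smul, sub_add_cancel]

end Eigenspaces

theorem stmt1_general {R M : Type*} [CommRing R] [AddCommGroup M] [Module R M]
    {S N : Module.End R M} (hS : S.IsFinitelySemisimple) (hN : ∀ x, ∃ n : ℕ, (N ^ n) x = 0)
    (hcomm : Commute S N) :
    LinearMap.ker (S + N) = LinearMap.ker S ⊓ LinearMap.ker N := by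
  have maxGenEigenspace_zero : N.maxGenEigenspace 0 = ⊤ :=
    Submodule.eq_top_iff'.mpr fun x ↦ by simpa using hN x
  simpa [maxGenEigenspace_zero] using eigenspace_add_inf_maxGenEigenspace hS hcomm 0 0

/-- Let `V` be a finite-dimensional vector space over a field, `S` a semisimple
endomorphism of `V` and `N` a nilpotent endomorphism of `V` with `S ∘ N = N ∘ S`.
Then `ker (S + N) = ker S ∩ ker N`. -/
theorem stmt1 {k V : Type*} [Field k] [AddCommGroup V] [Module k V]
    [FiniteDimensional k V]
    (S N : Module.End k V) (hS : S.IsSemisimple) (hN : IsNilpotent N)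
    (hcomm : S ∘ₗ N = N ∘ₗ S) :
    LinearMap.ker (S + N) = LinearMap.ker S ⊓ LinearMap.ker N :=
  stmt1_general hS.isFinitelySemisimple (fun x ↦ hN.imp fun _ hn ↦ LinearMap.congr_fun hn x) hcomm
end

section
/- Let u, v ∈ V be orthogonal vectors with u null, i.e. Q u = 0, and set g = 1 + ι v * ι u, so that g is invertible with inverse 1 − ι v * ι u. Then: (a) g * ι v * g⁻¹ = ι v − (2 * Q v) • ι u, i.e. the null rotation g sends the vector v to v − 2 Q(v) u; and (b) for every vector w ∈ V orthogonal to both u and v, g commutes with ι w, i.e. g * ι w * g⁻¹ = ι w. -/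
/-!
For `v ⊥ u` with `u` null, `ι u * ι v * ι u = 0`. Hence `n = ι v * ι u` squares to zero and `1 + n`
is a unit with inverse `1 - n`. The relation `(1 + n) * ι v = (ι v - (2 * Q v) • ι u) * (1 + n)`
follows from `ι v * n = Q v • ι u`, `n * ι v = -(Q v • ι u)` and `ι u * n = 0`. A vector orthogonal
to `u` and `v` anticommutes with both factors of `n`, hence commutes with `n`.
-/

open CliffordAlgebra

section NullRotation

variable {R M : Type*} [CommRing R] [AddCommGroup M] [Module R M] {Q : QuadraticForm R M}
  {u v w : M}

theorem ι_mul_ι_mul_ι_of_isOrtho (h : Q.IsOrtho u v) :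
    ι Q u * ι Q v * ι Q u = -(Q u • ι Q v) := by
  rw [ι_mul_ι_mul_ι, h.polar_eq_zero, zero_smul, zero_sub, map_neg, map_smul]

theorem ι_mul_ι_mul_ι_eq_zero (h : Q.IsOrtho u v) (hu : Q u = 0) :
    ι Q u * ι Q v * ι Q u = 0 := by
  rw [ι_mul_ι_mul_ι_of_isOrtho h, hu, zero_smul, neg_zero]

theorem ι_mul_ι_mul_self_eq_zero (h : Q.IsOrtho v u) (hu : Q u = 0) :
    ι Q v * ι Q u * (ι Q v * ι Q u) = 0 := by
  rw [mul_assoc, ← mul_assoc (ι Q u), ι_mul_ι_mul_ι_eq_zero h.symm hu, mul_zero]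

theorem commute_ι_mul_ι_of_isOrtho (huw : Q.IsOrtho u w) (hvw : Q.IsOrtho v w) :
    Commute (ι Q v * ι Q u) (ι Q w) :=
  calc ι Q v * ι Q u * ι Q w
      = -(ι Q v * ι Q w * ι Q u) := mul_ι_mul_ι_of_isOrtho _ huw
    _ = ι Q w * (ι Q v * ι Q u) := by
      rw [ι_mul_ι_comm_of_isOrtho hvw, neg_mul, neg_neg, mul_assoc]

/-- The null rotation `1 + ι v * ι u` attached to a null vector `u` and a vector `v ⊥ u`, as a unit
of the Clifford algebra, so that its inverse `1 - ι v * ι u` is part of the data. It acts on vectors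
by conjugation. -/
def nullRotation (hvu : Q.IsOrtho v u) (hu : Q u = 0) : (CliffordAlgebra Q)ˣ where
  val := 1 + ι Q v * ι Q u
  inv := 1 - ι Q v * ι Q u
  val_inv := by
    rw [← (Commute.one_left _).mul_self_sub_mul_self_eq, ι_mul_ι_mul_self_eq_zero hvu hu,
      mul_one, sub_zero]
  inv_val := by
    rw [← (Commute.one_left _).mul_self_sub_mul_self_eq', ι_mul_ι_mul_self_eq_zero hvu hu,
      mul_one, sub_zero]

theorem nullRotation_conj_ι_self (hvu : Q.IsOrtho v u) (hu : Q u = 0) :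
    (nullRotation hvu hu : CliffordAlgebra Q) * ι Q v * ↑(nullRotation hvu hu)⁻¹ =
      ι Q v - (2 * Q v) • ι Q u := by
  rw [Units.mul_inv_eq_iff_eq_mul]
  change (1 + ι Q v * ι Q u) * ι Q v = (ι Q v - (2 * Q v) • ι Q u) * (1 + ι Q v * ι Q u)
  have v_mul : ι Q v * (ι Q v * ι Q u) = Q v • ι Q u := by
    rw [← mul_assoc, ι_sq_scalar, Algebra.smul_def]
  have u_mul : ι Q u * (ι Q v * ι Q u) = 0 := by
    rw [← mul_assoc, ι_mul_ι_mul_ι_eq_zero hvu.symm hu]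
  calc (1 + ι Q v * ι Q u) * ι Q v
      = ι Q v - Q v • ι Q u := by
        rw [add_mul, one_mul, ι_mul_ι_mul_ι_of_isOrtho hvu, ← sub_eq_add_neg]
    _ = ι Q v - (2 * Q v) • ι Q u + Q v • ι Q u := by module
    _ = (ι Q v - (2 * Q v) • ι Q u) * (1 + ι Q v * ι Q u) := by
        rw [mul_add, mul_one, sub_mul, v_mul, smul_mul_assoc, u_mul, smul_zero, sub_zero]

theorem nullRotation_conj_ι_of_isOrtho (hvu : Q.IsOrtho v u) (hu : Q u = 0)
    (huw : Q.IsOrtho u w) (hvw : Q.IsOrtho v w) :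
    (nullRotation hvu hu : CliffordAlgebra Q) * ι Q w * ↑(nullRotation hvu hu)⁻¹ = ι Q w :=
  (Units.mul_inv_eq_iff_eq_mul _).mpr
    ((Commute.one_left _).add_left (commute_ι_mul_ι_of_isOrtho huw hvw))

end NullRotation

theorem stmt8_general {R M : Type*} [CommRing R] [AddCommGroup M] [Module R M]
    (Q : QuadraticForm R M) (u v : M) (horth : QuadraticMap.polar Q v u = 0) (hu : Q u = 0) :
    (1 + ι Q v * ι Q u) * ι Q v * (1 - ι Q v * ι Q u) =
        ι Q v - (2 * Q v) • ι Q u ∧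
    (∀ w : M, QuadraticMap.polar Q u w = 0 → QuadraticMap.polar Q v w = 0 →
      (1 + ι Q v * ι Q u) * ι Q w * (1 - ι Q v * ι Q u) = ι Q w) := by
  have hvu : Q.IsOrtho v u := QuadraticMap.isOrtho_polarBilin.mp horth
  refine ⟨nullRotation_conj_ι_self hvu hu, fun w huw hvw => ?_⟩
  exact nullRotation_conj_ι_of_isOrtho hvu hu
    (QuadraticMap.isOrtho_polarBilin.mp huw) (QuadraticMap.isOrtho_polarBilin.mp hvw)

/-- Let `u, v ∈ V` be orthogonal vectors with `u` null (`Q u = 0`), and set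
`g = 1 + ι v * ι u`, so that `g` is invertible with inverse `g⁻¹ = 1 - ι v * ι u`.
Then (a) `g * ι v * g⁻¹ = ι v - (2 * Q v) • ι u`, and (b) for every vector `w`
orthogonal to both `u` and `v`, `g * ι w * g⁻¹ = ι w`. -/
theorem stmt8 {V : Type*} [AddCommGroup V] [Module ℝ V] (Q : QuadraticForm ℝ V)
    (u v : V) (horth : QuadraticMap.polar Q v u = 0) (hu : Q u = 0) :
    (1 + ι Q v * ι Q u) * ι Q v * (1 - ι Q v * ι Q u) =
        ι Q v - (2 * Q v) • ι Q u ∧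
    (∀ w : V, QuadraticMap.polar Q u w = 0 → QuadraticMap.polar Q v w = 0 →
      (1 + ι Q v * ι Q u) * ι Q w * (1 - ι Q v * ι Q u) = ι Q w) :=
  stmt8_general Q u v horth hu
end

section
/- Let V be a vector space over a field k and let A, B, P be endomorphisms of V such that A ∘ A = 0, B ∘ B = 0, A ∘ B + B ∘ A = c • id for some nonzero scalar c, P ∘ P = id, P ∘ A = − A ∘ P, and P ∘ B = − B ∘ P. Then B restricts to a linear isomorphism from the subspace ker A ∩ ker(P − id) onto the subspace ker B ∩ ker(P + id); in particular, if V is finite-dimensional these subspaces have equal dimension. -/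
/-!
On `ker A` the relation `A B + B A = c` reads `A (B x) = c x`, and on `ker B` it reads
`B (A y) = c y`. As `A` and `B` square to zero, `B : ker A → ker B` is therefore bijective with
inverse `c⁻¹ A`. Both maps anticommute with `P`, so they carry an eigenvector of `P` to one of the
opposite eigenvalue, and the bijection respects the eigenspaces.
-/

open Module Module.End Set

section Anticommutator

variable {R M : Type*} [CommSemiring R] [AddCommMonoid M] [Module R M] {A B : M →ₗ[R] M} {c : R}

theorem apply_apply_eq_smul_of_mem_ker (hAB : A ∘ₗ B + B ∘ₗ A = c • LinearMap.id) {x : M}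
    (hx : x ∈ LinearMap.ker A) : A (B x) = c • x := by
  simpa [LinearMap.mem_ker.1 hx] using LinearMap.congr_fun hAB x

theorem mapsTo_ker_inf_of_comp_self_eq_zero (hB : B ∘ₗ B = 0) {s : Set M}
    {N : Submodule R M} (hs : MapsTo B s N) : MapsTo B s (LinearMap.ker B ⊓ N : Submodule R M) :=
  fun x hx ↦ ⟨LinearMap.congr_fun hB x, hs hx⟩

theorem bijOn_ker_inf_ker_inf (hc : IsUnit c) (hA : A ∘ₗ A = 0) (hB : B ∘ₗ B = 0)
    (hAB : A ∘ₗ B + B ∘ₗ A = c • LinearMap.id) {N N' : Submodule R M}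
    (hBN : MapsTo B N N') (hAN' : MapsTo A N' N) :
    BijOn B (LinearMap.ker A ⊓ N : Submodule R M) (LinearMap.ker B ⊓ N' : Submodule R M) := by
  obtain ⟨u, rfl⟩ := hc
  have hBA : B ∘ₗ A + A ∘ₗ B = (u : R) • LinearMap.id := by rwa [add_comm]
  have left_inv : LeftInvOn (fun y ↦ u⁻¹ • A y) B (LinearMap.ker A ⊓ N : Submodule R M) := by
    intro x hx
    calc u⁻¹ • A (B x) = u⁻¹ • u • x := by
          rw [apply_apply_eq_smul_of_mem_ker hAB hx.1, Units.smul_def u]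
      _ = x := inv_smul_smul u x
  have right_inv : RightInvOn (fun y ↦ u⁻¹ • A y) B (LinearMap.ker B ⊓ N' : Submodule R M) := by
    intro y hy
    calc B (u⁻¹ • A y) = u⁻¹ • B (A y) := B.map_smul_of_tower u⁻¹ (A y)
      _ = u⁻¹ • u • y := by rw [apply_apply_eq_smul_of_mem_ker hBA hy.1, Units.smul_def u]
      _ = y := inv_smul_smul u y
  have mapsTo_inv : MapsTo (fun y ↦ u⁻¹ • A y) N' (LinearMap.ker A ⊓ N : Submodule R M) :=
    fun y hy ↦ Submodule.smul_mem _ _ (mapsTo_ker_inf_of_comp_self_eq_zero hA hAN' hy)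
  exact InvOn.bijOn ⟨left_inv, right_inv⟩
    ((mapsTo_ker_inf_of_comp_self_eq_zero hB hBN).mono_left inter_subset_right)
    (mapsTo_inv.mono_left inter_subset_right)

end Anticommutator

universe u in
theorem rank_eq_of_bijOn {R : Type*} {M N : Type u} [Semiring R] [AddCommMonoid M] [AddCommMonoid N]
    [Module R M] [Module R N] {f : M →ₗ[R] N} {p : Submodule R M} {q : Submodule R N}
    (hf : BijOn f p q) : Module.rank R p = Module.rank R q :=
  (LinearEquiv.ofBijective (f.restrict hf.mapsTo) hf.bijective).rank_eq

section Eigenspace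

variable {R M : Type*} [CommRing R] [AddCommGroup M] [Module R M]

theorem mapsTo_eigenspace_neg_of_anticomm {P B : M →ₗ[R] M} (hPB : P ∘ₗ B = -(B ∘ₗ P)) (μ : R) :
    MapsTo B (eigenspace P μ) (eigenspace P (-μ)) := by
  intro x hx
  have hPx : P x = μ • x := mem_eigenspace_iff.1 hx
  refine mem_eigenspace_iff.2 ?_
  calc P (B x) = -B (P x) := LinearMap.congr_fun hPB x
    _ = -μ • B x := by rw [hPx, map_smul, neg_smul]

theorem eigenspace_one_eq_ker_sub_id (P : M →ₗ[R] M) :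
    eigenspace P 1 = LinearMap.ker (P - LinearMap.id) := by
  rw [eigenspace_def, one_smul, one_eq_id]

theorem eigenspace_neg_one_eq_ker_add_id (P : M →ₗ[R] M) :
    eigenspace P (-1) = LinearMap.ker (P + LinearMap.id) := by
  rw [eigenspace_def, neg_one_smul, sub_neg_eq_add, one_eq_id]

end Eigenspace

theorem stmt14_general {R M : Type*} [CommRing R] [AddCommGroup M] [Module R M]
    (A B P : M →ₗ[R] M) {c : R} (hc : IsUnit c)
    (hA : A ∘ₗ A = 0) (hB : B ∘ₗ B = 0) (hAB : A ∘ₗ B + B ∘ₗ A = c • LinearMap.id)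
    (hPA : P ∘ₗ A = -(A ∘ₗ P)) (hPB : P ∘ₗ B = -(B ∘ₗ P)) (μ : R) :
    BijOn B (LinearMap.ker A ⊓ eigenspace P μ : Submodule R M)
      (LinearMap.ker B ⊓ eigenspace P (-μ) : Submodule R M) ∧
    Module.rank R ↥(LinearMap.ker A ⊓ eigenspace P μ) =
      Module.rank R ↥(LinearMap.ker B ⊓ eigenspace P (-μ)) := by
  have hAμ : MapsTo A (eigenspace P (-μ)) (eigenspace P μ) := by
    simpa only [neg_neg] using mapsTo_eigenspace_neg_of_anticomm hPA (-μ)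
  have hbij := bijOn_ker_inf_ker_inf hc hA hB hAB (mapsTo_eigenspace_neg_of_anticomm hPB μ) hAμ
  exact ⟨hbij, rank_eq_of_bijOn hbij⟩

/-- Let `A, B, P` be endomorphisms of a vector space `V` over `k` with `A ∘ A = 0`,
`B ∘ B = 0`, `A ∘ B + B ∘ A = c • id` for some nonzero `c`, `P ∘ P = id`,
`P ∘ A = - A ∘ P` and `P ∘ B = - B ∘ P`.  Then `B` restricts to a linear isomorphism
(a bijection) from `ker A ∩ ker (P - id)` onto `ker B ∩ ker (P + id)`; in particular,
if `V` is finite-dimensional these subspaces have equal dimension. -/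
theorem stmt14 {k V : Type*} [Field k] [AddCommGroup V] [Module k V]
    (A B P : V →ₗ[k] V) (c : k) (hc : c ≠ 0)
    (hA : A ∘ₗ A = 0) (hB : B ∘ₗ B = 0)
    (hAB : A ∘ₗ B + B ∘ₗ A = c • (LinearMap.id : V →ₗ[k] V))
    (hP : P ∘ₗ P = LinearMap.id)
    (hPA : P ∘ₗ A = -(A ∘ₗ P)) (hPB : P ∘ₗ B = -(B ∘ₗ P)) :
    Set.BijOn B
      ((LinearMap.ker A ⊓ LinearMap.ker (P - LinearMap.id) : Submodule k V) : Set V)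
      ((LinearMap.ker B ⊓ LinearMap.ker (P + LinearMap.id) : Submodule k V) : Set V) ∧
    (FiniteDimensional k V →
      Module.finrank k ↥(LinearMap.ker A ⊓ LinearMap.ker (P - LinearMap.id)) =
        Module.finrank k ↥(LinearMap.ker B ⊓ LinearMap.ker (P + LinearMap.id))) := by
  rw [← eigenspace_one_eq_ker_sub_id, ← eigenspace_neg_one_eq_ker_add_id]
  exact (stmt14_general A B P hc.isUnit hA hB hAB hPA hPB 1).imp_right
    fun hrank _ ↦ congrArg Cardinal.toNat hrank
end

section
/- Let V be a finite-dimensional vector space over a field of characteristic zero, let N, K, P be endomorphisms of V and J a linear automorphism of V such that: N ∘ N = 0, K ∘ K = 0, K ∘ N + N ∘ K = c • id with c ≠ 0, P ∘ P = id, P ∘ N = − N ∘ P, J ∘ N = N ∘ J, and J ∘ P = − P ∘ J. Then dim (ker N ∩ ker(P − id)) = (dim V)/4. -/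
/-!
The map `c⁻¹ • K` is a contracting homotopy of `(V, N)`, so `0 → ker N → V → ker N → 0` is split
exact and `V ≅ (ker N)²`. Anticommuting with `N`, the involution `P` acts on `ker N` and splits it
into its `+1` and `-1` eigenspaces; the automorphism `J` preserves `ker N` and, anticommuting with
`P`, exchanges the two eigenspaces. Hence `V` is isomorphic to four copies of
`ker N ⊓ ker (P - id)`.
-/

section Ring

open LinearMap

variable {R V : Type*} [Ring R] [AddCommGroup V] [Module R V]

theorem nonempty_linearEquiv_fin_two_ker_of_homotopy {N H : V →ₗ[R] V} (hN : N ∘ₗ N = 0)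
    (hH : H ∘ₗ N + N ∘ₗ H = LinearMap.id) :
    Nonempty (V ≃ₗ[R] (Fin 2 → ker N)) := by
  let d : V →ₗ[R] ker N := N.codRestrict (ker N) (LinearMap.congr_fun hN)
  have exact_d : Function.Exact (ker N).subtype d :=
    exact_iff.mpr ((ker_codRestrict _ _ _).trans (ker N).range_subtype.symm)
  have section_d : d ∘ₗ H ∘ₗ (ker N).subtype = LinearMap.id := by
    ext v
    have hNH : N (H v) = v := by simpa using LinearMap.congr_fun hH v
    exact hNH
  let split := (exact_d.splitSurjectiveEquiv (ker N).injective_subtype ⟨_, section_d⟩).1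
  exact ⟨split.trans (LinearEquiv.finTwoArrow R _).symm⟩

theorem map_ker_eq_ker_of_comp_eq_comp {W : Type*} [AddCommGroup W] [Module R W]
    {e : V ≃ₗ[R] W} {f : V →ₗ[R] V} {g : W →ₗ[R] W}
    (h : e.toLinearMap ∘ₗ f = g ∘ₗ e.toLinearMap) :
    (ker f).map e.toLinearMap = ker g := by
  rw [← e.ker_comp f, h, ker_comp, Submodule.map_comap_eq_of_surjective e.surjective]

theorem isCompl_ker_sub_id_ker_add_id [Invertible (2 : R)] {P : V →ₗ[R] V}
    (hP : P ∘ₗ P = LinearMap.id) :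
    IsCompl (ker (P - LinearMap.id)) (ker (P + LinearMap.id)) := by
  have hPP (v : V) : P (P v) = v := LinearMap.congr_fun hP v
  constructor
  · rw [Submodule.disjoint_def]
    intro v hv_sub hv_add
    have hv : P v = v := by simpa [sub_eq_zero] using hv_sub
    have two_smul_v : (2 : R) • v = 0 := by simpa [hv, two_smul] using hv_add
    exact (isUnit_of_invertible (2 : R)).smul_eq_zero.mp two_smul_v
  · rw [Submodule.codisjoint_iff_exists_add_eq]
    intro v
    refine ⟨⅟(2 : R) • (v + P v), ⅟(2 : R) • (v - P v), ?_, ?_, ?_⟩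
    · simp [hPP, add_comm]
    · simp [hPP]
    · rw [← smul_add, add_add_sub_cancel, ← two_smul R v, invOf_smul_smul]

theorem map_ker_sub_id_eq_ker_add_id {P : V →ₗ[R] V} {J : V ≃ₗ[R] V}
    (hJP : J.toLinearMap ∘ₗ P = -(P ∘ₗ J.toLinearMap)) :
    (ker (P - LinearMap.id)).map J.toLinearMap = ker (P + LinearMap.id) := by
  rw [← ker_neg (P + LinearMap.id)]
  apply map_ker_eq_ker_of_comp_eq_comp
  rw [comp_sub, hJP, neg_comp, add_comp, comp_id, id_comp, neg_add']

theorem nonempty_linearEquiv_fin_two_ker_sub_id [Invertible (2 : R)] {P : V →ₗ[R] V}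
    {J : V ≃ₗ[R] V} (hP : P ∘ₗ P = LinearMap.id)
    (hJP : J.toLinearMap ∘ₗ P = -(P ∘ₗ J.toLinearMap)) :
    Nonempty (V ≃ₗ[R] (Fin 2 → ker (P - LinearMap.id))) := by
  let swap := J.ofSubmodules _ _ (map_ker_sub_id_eq_ker_add_id hJP)
  let split := Submodule.prodEquivOfIsCompl _ _ (isCompl_ker_sub_id_ker_add_id hP)
  let double := (LinearEquiv.finTwoArrow R _).trans ((LinearEquiv.refl R _).prodCongr swap)
  exact ⟨(double.trans split).symm⟩

theorem map_subtype_ker_restrict_sub_id {p : Submodule R V} {f : V →ₗ[R] V}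
    (hf : ∀ v ∈ p, f v ∈ p) :
    (ker (f.restrict hf - LinearMap.id)).map p.subtype = p ⊓ ker (f - LinearMap.id) := by
  rw [← Submodule.map_comap_subtype]
  congr 1
  ext v
  simp [sub_eq_zero, Subtype.ext_iff]

theorem nonempty_linearEquiv_fin_two_inf_ker_sub_id [Invertible (2 : R)] {p : Submodule R V}
    {P : V →ₗ[R] V} {J : V ≃ₗ[R] V} (hPp : ∀ v ∈ p, P v ∈ p) (hJp : p.map J.toLinearMap = p)
    (hP : P ∘ₗ P = LinearMap.id) (hJP : J.toLinearMap ∘ₗ P = -(P ∘ₗ J.toLinearMap)) :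
    Nonempty (p ≃ₗ[R] (Fin 2 → ↥(p ⊓ ker (P - LinearMap.id)))) := by
  have restrict_hP : P.restrict hPp ∘ₗ P.restrict hPp = LinearMap.id := by
    ext v
    exact LinearMap.congr_fun hP v
  have restrict_hJP : (J.ofSubmodules p p hJp).toLinearMap ∘ₗ P.restrict hPp =
      -(P.restrict hPp ∘ₗ (J.ofSubmodules p p hJp).toLinearMap) := by
    ext v
    exact LinearMap.congr_fun hJP v
  obtain ⟨split⟩ := nonempty_linearEquiv_fin_two_ker_sub_id restrict_hP restrict_hJP
  rw [← map_subtype_ker_restrict_sub_id hPp]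
  exact ⟨split.trans (LinearEquiv.piCongrRight fun _ => p.equivSubtypeMap _)⟩

end Ring

theorem stmt17_general {R V : Type*} [CommRing R] [Invertible (2 : R)] [AddCommGroup V]
    [Module R V] (N K P : V →ₗ[R] V) (J : V ≃ₗ[R] V) (c : R) (hc : IsUnit c)
    (hN : N ∘ₗ N = 0)
    (hNK : K ∘ₗ N + N ∘ₗ K = c • (LinearMap.id : V →ₗ[R] V))
    (hP : P ∘ₗ P = LinearMap.id)
    (hPN : P ∘ₗ N = -(N ∘ₗ P))
    (hJN : J.toLinearMap ∘ₗ N = N ∘ₗ J.toLinearMap)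
    (hJP : J.toLinearMap ∘ₗ P = -(P ∘ₗ J.toLinearMap)) :
    Nonempty (V ≃ₗ[R] (Fin 4 → ↥(LinearMap.ker N ⊓ LinearMap.ker (P - LinearMap.id)))) := by
  obtain ⟨u, rfl⟩ := hc
  have contraction : (u⁻¹ • K) ∘ₗ N + N ∘ₗ (u⁻¹ • K) = LinearMap.id := by
    rw [LinearMap.smul_comp, LinearMap.comp_smul, ← smul_add, hNK, ← Units.smul_def,
      inv_smul_smul]
  have P_mem_ker (v : V) (hv : v ∈ LinearMap.ker N) : P v ∈ LinearMap.ker N := by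
    simpa [LinearMap.mem_ker.mp hv] using LinearMap.congr_fun hPN v
  obtain ⟨halve⟩ := nonempty_linearEquiv_fin_two_ker_of_homotopy hN contraction
  obtain ⟨halve_ker⟩ := nonempty_linearEquiv_fin_two_inf_ker_sub_id P_mem_ker
    (map_ker_eq_ker_of_comp_eq_comp hJN) hP hJP
  let A := LinearMap.ker N ⊓ LinearMap.ker (P - LinearMap.id)
  let quarter := halve.trans (LinearEquiv.piCongrRight fun _ => halve_ker)
  let uncurry := (LinearEquiv.curry R A (Fin 2) (Fin 2)).symm
  let reindex := LinearEquiv.funCongrLeft R A (finProdFinEquiv (m := 2) (n := 2)).symm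
  exact ⟨(quarter.trans uncurry).trans reindex⟩

/-- Let `V` be a finite-dimensional vector space over a field of characteristic
zero, `N, K, P` endomorphisms of `V` and `J` a linear automorphism such that
`N ∘ N = 0`, `K ∘ K = 0`, `K ∘ N + N ∘ K = c • id` with `c ≠ 0`, `P ∘ P = id`,
`P ∘ N = - N ∘ P`, `J ∘ N = N ∘ J` and `J ∘ P = - P ∘ J`.  Then
`dim (ker N ∩ ker (P - id)) = (dim V)/4`. -/
theorem stmt17 {k V : Type*} [Field k] [CharZero k] [AddCommGroup V] [Module k V]
    [FiniteDimensional k V]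
    (N K P : V →ₗ[k] V) (J : V ≃ₗ[k] V) (c : k) (hc : c ≠ 0)
    (hN : N ∘ₗ N = 0) (hK : K ∘ₗ K = 0)
    (hNK : K ∘ₗ N + N ∘ₗ K = c • (LinearMap.id : V →ₗ[k] V))
    (hP : P ∘ₗ P = LinearMap.id)
    (hPN : P ∘ₗ N = -(N ∘ₗ P))
    (hJN : J.toLinearMap ∘ₗ N = N ∘ₗ J.toLinearMap)
    (hJP : J.toLinearMap ∘ₗ P = -(P ∘ₗ J.toLinearMap)) :
    Module.finrank k ↥(LinearMap.ker N ⊓ LinearMap.ker (P - LinearMap.id)) =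
      Module.finrank k V / 4 := by
  obtain ⟨e⟩ := stmt17_general N K P J c hc.isUnit hN hNK hP hPN hJN hJP
  simp [e.finrank_eq, Module.finrank_pi_fintype]
end

section
/- Let e : Fin 11 → V be a family of pairwise orthogonal vectors with Q (e 0) = −1 and Q (e i) = 1 for all i ≥ 1, and let ω = ι(e 0) * ι(e 1) * ⋯ * ι(e 10) be the ordered product of their images in the Clifford algebra. Then ω * ω = 1, and ω commutes with ι(e i) for every i; consequently ω commutes with ι v for every v in the span of the e i. -/
/-!
In an odd-length product of pairwise anticommuting elements, a factor moves past all the others at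
the cost of an even number of signs, so it commutes with the product. Reordering two copies of a
product of `n` pairwise anticommuting elements to bring equal factors together costs one sign per
pair of distinct factors, `(-1) ^ (n choose 2)` in all. Orthogonal vectors anticommute in the
Clifford algebra; for `n = 11` the sign is `(-1) ^ 55 = -1`, which cancels the `-1` from `Q (e 0)`.
-/

open CliffordAlgebra

/-- Two elements anticommute if `a * b = -(b * a)`. Encoding this as a semiconjugation makes the
composition lemmas for `SemiconjBy` apply to products of anticommuting elements. -/
def Anticommute {A : Type*} [Mul A] [Neg A] (a b : A) : Prop := SemiconjBy a b (-b)

namespace Anticommute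

lemma symm {A : Type*} [Mul A] [HasDistribNeg A] {a b : A} (h : Anticommute a b) :
    Anticommute b a := by
  have hab : a * b = -b * a := h
  change b * a = -a * b
  rw [neg_mul, hab, neg_mul, neg_neg]

variable {A : Type*} [Monoid A] [HasDistribNeg A] {a x : A} {l : List A}

lemma semiconjBy_neg_one_pow_mul (h : Anticommute a x) (k : ℕ) :
    SemiconjBy a ((-1) ^ k * x) ((-1) ^ (k + 1) * x) := by
  rw [pow_succ, mul_assoc, neg_one_mul]
  exact SemiconjBy.mul_right ((Commute.neg_one_right a).pow_right k) h

lemma semiconjBy_list_prod (h : ∀ a ∈ l, Anticommute a x) :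
    SemiconjBy l.prod x ((-1) ^ l.length * x) := by
  induction l with
  | nil => simp
  | cons a t ih =>
    rw [List.forall_mem_cons] at h
    rw [List.prod_cons, List.length_cons]
    exact (h.1.semiconjBy_neg_one_pow_mul t.length).mul_left (ih h.2)

-- `x` passes `l.length - 1` other factors; the exponent `l.length + 1` has the same parity and
-- avoids truncated subtraction.
lemma semiconjBy_list_prod_of_mem (hl : l.Pairwise Anticommute) (hx : x ∈ l) :
    SemiconjBy l.prod x ((-1) ^ (l.length + 1) * x) := by
  induction l with
  | nil => simp at hx
  | cons a t ih =>
    rw [List.pairwise_cons] at hl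
    rw [List.prod_cons, List.length_cons]
    rcases List.mem_cons.1 hx with rfl | hxt
    · have htail : SemiconjBy t.prod x ((-1) ^ t.length * x) :=
        semiconjBy_list_prod fun b hb => (hl.1 b hb).symm
      have hself : Commute x ((-1) ^ t.length * x) :=
        ((Commute.neg_one_right x).pow_right _).mul_right (Commute.refl x)
      rw [add_assoc, pow_add, one_add_one_eq_two, neg_one_sq, mul_one]
      exact SemiconjBy.mul_left hself htail
    · exact ((hl.1 x hxt).semiconjBy_neg_one_pow_mul _).mul_left (ih hl.2 hxt)

lemma commute_list_prod_of_odd_length (hl : l.Pairwise Anticommute) (hodd : Odd l.length)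
    (hx : x ∈ l) : Commute l.prod x := by
  have h := semiconjBy_list_prod_of_mem hl hx
  rwa [hodd.add_one.neg_one_pow, one_mul] at h

lemma list_prod_sq (hl : l.Pairwise Anticommute) :
    l.prod ^ 2 = (-1) ^ l.length.choose 2 * (l.map (· ^ 2)).prod := by
  induction l with
  | nil => simp
  | cons a t ih =>
    rw [List.pairwise_cons] at hl
    have hswap : t.prod * a = (-1) ^ t.length * a * t.prod :=
      semiconjBy_list_prod fun b hb => (hl.1 b hb).symm
    have hcomm (k : ℕ) (y : A) : y * (-1) ^ k = (-1) ^ k * y :=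
      (Commute.neg_one_right y).pow_right k
    calc (a :: t).prod ^ 2 = a * (t.prod * a) * t.prod := by
          rw [List.prod_cons, sq]; simp only [mul_assoc]
      _ = (-1) ^ t.length * (a ^ 2 * t.prod ^ 2) := by
          rw [hswap, ← mul_assoc, ← mul_assoc, hcomm, sq, sq]; simp only [mul_assoc]
      _ = (-1) ^ t.length * (-1) ^ t.length.choose 2 * (a ^ 2 * (t.map (· ^ 2)).prod) := by
          rw [ih hl.2, ← mul_assoc (a ^ 2), hcomm]; simp only [mul_assoc]
      _ = (-1) ^ (a :: t).length.choose 2 * ((a :: t).map (· ^ 2)).prod := by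
          rw [← pow_add, List.length_cons, Nat.choose_succ_succ', Nat.choose_one_right,
            List.map_cons, List.prod_cons]

end Anticommute

section CliffordAlgebra

variable {R M : Type*} [CommRing R] [AddCommGroup M] [Module R M] {Q : QuadraticForm R M}

lemma anticommute_ι_of_isOrtho {v w : M} (h : Q.IsOrtho v w) : Anticommute (ι Q v) (ι Q w) :=
  (ι_mul_ι_comm_of_isOrtho h).trans (neg_mul _ _).symm

lemma pairwise_anticommute_ofFn_ι {n : ℕ} {e : Fin n → M}
    (he : Pairwise fun i j => Q.IsOrtho (e i) (e j)) :
    (List.ofFn fun i => ι Q (e i)).Pairwise Anticommute :=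
  List.pairwise_ofFn.2 fun _ _ hij => anticommute_ι_of_isOrtho (he hij.ne)

lemma prod_ofFn_ι_mul_self {n : ℕ} {e : Fin n → M}
    (he : Pairwise fun i j => Q.IsOrtho (e i) (e j)) :
    (List.ofFn fun i => ι Q (e i)).prod * (List.ofFn fun i => ι Q (e i)).prod =
      algebraMap R _ ((-1) ^ n.choose 2 * ∏ i, Q (e i)) := by
  have hsq : (List.ofFn fun i => ι Q (e i)).map (· ^ 2) =
      (List.ofFn fun i => Q (e i)).map (algebraMap R (CliffordAlgebra Q)) := by
    simp only [List.map_ofFn, Function.comp_def, sq, ι_sq_scalar]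
  rw [← sq, Anticommute.list_prod_sq (pairwise_anticommute_ofFn_ι he), hsq, ← map_list_prod,
    List.length_ofFn, List.prod_ofFn, map_mul, map_pow, map_neg, map_one]

end CliffordAlgebra

theorem stmt19_general {R M : Type*} [CommRing R] [AddCommGroup M] [Module R M]
    (Q : QuadraticForm R M) {n : ℕ} (hn : Odd n) (e : Fin n → M)
    (he : Pairwise fun i j => Q.IsOrtho (e i) (e j)) :
    (List.ofFn fun i => ι Q (e i)).prod * (List.ofFn fun i => ι Q (e i)).prod =
      algebraMap R _ ((-1) ^ n.choose 2 * ∏ i, Q (e i)) ∧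
    (∀ i : Fin n,
      (List.ofFn fun i => ι Q (e i)).prod * ι Q (e i) =
        ι Q (e i) * (List.ofFn fun i => ι Q (e i)).prod) ∧
    (∀ v ∈ Submodule.span R (Set.range e),
      (List.ofFn fun i => ι Q (e i)).prod * ι Q v =
        ι Q v * (List.ofFn fun i => ι Q (e i)).prod) := by
  have hcomm (i : Fin n) : Commute (List.ofFn fun i => ι Q (e i)).prod (ι Q (e i)) :=
    Anticommute.commute_list_prod_of_odd_length (pairwise_anticommute_ofFn_ι he)
      (by rwa [List.length_ofFn]) (List.mem_ofFn.2 ⟨i, rfl⟩)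
  exact ⟨prod_ofFn_ι_mul_self he, hcomm,
    fun v hv => Commute.span_right
      (Set.forall_mem_image.2 (Set.forall_mem_range.2 hcomm)) _
      (Submodule.apply_mem_span_image_of_mem_span (ι Q) hv)⟩

/-- Let `e : Fin 11 → V` be a family of pairwise orthogonal vectors with
`Q (e 0) = -1` and `Q (e i) = 1` for all `i ≥ 1`, and let
`ω = ι (e 0) * ι (e 1) * ⋯ * ι (e 10)` be the ordered product of their images in
the Clifford algebra.  Then `ω * ω = 1` and `ω` commutes with `ι (e i)` for every
`i`; consequently `ω` commutes with `ι v` for every `v` in the span of the `e i`. -/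
theorem stmt19 {V : Type*} [AddCommGroup V] [Module ℝ V] (Q : QuadraticForm ℝ V)
    (e : Fin 11 → V)
    (horth : ∀ i j, i ≠ j → QuadraticMap.polar Q (e i) (e j) = 0)
    (h0 : Q (e 0) = -1) (h1 : ∀ i : Fin 11, i ≠ 0 → Q (e i) = 1) :
    (List.ofFn fun i => ι Q (e i)).prod * (List.ofFn fun i => ι Q (e i)).prod = 1 ∧
    (∀ i : Fin 11,
      (List.ofFn fun i => ι Q (e i)).prod * ι Q (e i) =
        ι Q (e i) * (List.ofFn fun i => ι Q (e i)).prod) ∧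
    (∀ v ∈ Submodule.span ℝ (Set.range e),
      (List.ofFn fun i => ι Q (e i)).prod * ι Q v =
        ι Q v * (List.ofFn fun i => ι Q (e i)).prod) := by
  have hsign : (-1) ^ Nat.choose 11 2 * ∏ i, Q (e i) = 1 := by
    simp [Fin.prod_univ_succ, h0, h1, Nat.choose, Odd.neg_one_pow (show Odd 55 by decide)]
  simpa only [hsign, map_one] using stmt19_general Q (by decide) e fun i j hij =>
    QuadraticMap.isOrtho_polarBilin.1 (horth i j hij)
end
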